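/- arXiv:math/0105084 — 5 statements merged into one kernel-verified Lean document; each statement's English description precedes it below -/
import Mathlib

section
/- Let F be a field, a, b ∈ F with a ≠ 0, b ≠ 0 and ab − b + 1 ≠ 0. Let x ∈ F with B(x) ≠ 0. Then the map ρ given by ρ(x) = −A(x)/B(x) is an involution: ρ(ρ(x)) = x (note that B(ρ(x)) = −μ/B(x) ≠ 0, so ρ(ρ(x)) is defined). -/
/-- A(x) = (a·x − a + 1)/a -/
def Af {F : Type*} [Field F] (a x : F) : F := (a * x - a + 1) / a

/-- B(x) = b·x − x + 1 -/
def Bf {F : Type*} [Field F] (b x : F) : F := b * x - x + 1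

/-- μ = −(a·b − b + 1)/a -/
def muf {F : Type*} [Field F] (a b : F) : F := -(a * b - b + 1) / a

/-- k(x) = B(x)/(a·b·x·A(x)) -/
def kf {F : Type*} [Field F] (a b x : F) : F := Bf b x / (a * b * x * Af a x)

/-- ρ(x) = −A(x)/B(x) -/
def rhof {F : Type*} [Field F] (a b x : F) : F := -(Af a x) / Bf b x

/-- σ(x) = −x/B(x) -/
def sigf {F : Type*} [Field F] (b x : F) : F := -x / Bf b x

/-!
`ρ` is the linear fractional map of `M = !![-1, (a - 1) / a; b - 1, 1]`. This matrix has trace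
zero, so by Cayley–Hamilton `M ^ 2` is the scalar matrix `-det M`, and `det M = μ ≠ 0`. Hence
`ρ ∘ ρ` is the identity wherever `ρ` is defined.
-/

section TracelessMoebius

variable {F : Type*} [Field F] {p q r x : F}

/-- The linear fractional map of the trace-zero matrix `!![p, q; r, -p]`, the shape shared by all
nontrivial linear fractional involutions, `ρ` among them. It lives on the
affine line: at a pole `r * x = p` it takes the junk value `0`. -/
def tracelessMoebius (p q r x : F) : F := (p * x + q) / (r * x - p)

lemma tracelessMoebius_numerator (hx : r * x - p ≠ 0) :
    p * tracelessMoebius p q r x + q = (p ^ 2 + q * r) * x / (r * x - p) := by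
  rw [tracelessMoebius, eq_div_iff hx, add_mul, mul_assoc, div_mul_cancel₀ _ hx]
  ring

lemma tracelessMoebius_denominator (hx : r * x - p ≠ 0) :
    r * tracelessMoebius p q r x - p = (p ^ 2 + q * r) / (r * x - p) := by
  rw [tracelessMoebius, eq_div_iff hx, sub_mul, mul_assoc, div_mul_cancel₀ _ hx]
  ring

theorem tracelessMoebius_tracelessMoebius (hdet : p ^ 2 + q * r ≠ 0) (hx : r * x - p ≠ 0) :
    tracelessMoebius p q r (tracelessMoebius p q r x) = x := calc
  tracelessMoebius p q r (tracelessMoebius p q r x)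
    = (p * tracelessMoebius p q r x + q) / (r * tracelessMoebius p q r x - p) := rfl
  _ = ((p ^ 2 + q * r) * x / (r * x - p)) / ((p ^ 2 + q * r) / (r * x - p)) := by
    rw [tracelessMoebius_numerator hx, tracelessMoebius_denominator hx]
  _ = (p ^ 2 + q * r) * x / (p ^ 2 + q * r) := div_div_div_cancel_right₀ hx _ _
  _ = x := mul_div_cancel_left₀ x hdet

end TracelessMoebius

section Rho

variable {F : Type*} [Field F] {a b : F}

lemma Bf_eq_sub_neg_one (b x : F) : Bf b x = (b - 1) * x - (-1) := by
  unfold Bf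
  ring

lemma rhof_eq_tracelessMoebius (ha : a ≠ 0) (b x : F) :
    rhof a b x = tracelessMoebius (-1) ((a - 1) / a) (b - 1) x := by
  have neg_Af : -Af a x = -1 * x + (a - 1) / a := by
    unfold Af
    field_simp
    ring
  rw [rhof, tracelessMoebius, neg_Af, Bf_eq_sub_neg_one]

lemma neg_muf_eq (ha : a ≠ 0) (b : F) :
    -muf a b = (-1) ^ 2 + (a - 1) / a * (b - 1) := by
  unfold muf
  field_simp
  ring

lemma muf_ne_zero (ha : a ≠ 0) (hab : a * b - b + 1 ≠ 0) : muf a b ≠ 0 :=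
  div_ne_zero (neg_ne_zero.mpr hab) ha

end Rho

/-- ρ given by ρ(x) = −A(x)/B(x) is an involution: ρ(ρ(x)) = x. -/
theorem stmt_0 {F : Type*} [Field F] (a b : F) (ha : a ≠ 0) (hb : b ≠ 0)
    (hab : a * b - b + 1 ≠ 0) (x : F) (hBx : Bf b x ≠ 0) :
    rhof a b (rhof a b x) = x := by
  have neg_det_ne_zero : (-1) ^ 2 + (a - 1) / a * (b - 1) ≠ 0 :=
    neg_muf_eq ha b ▸ neg_ne_zero.mpr (muf_ne_zero ha hab)
  have denominator_ne_zero : (b - 1) * x - (-1) ≠ 0 := Bf_eq_sub_neg_one b x ▸ hBx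
  simp only [rhof_eq_tracelessMoebius ha]
  exact tracelessMoebius_tracelessMoebius neg_det_ne_zero denominator_ne_zero
end

section
/- Let F be a field, a, b ∈ F with a ≠ 0, and let x ∈ F with A(x) ≠ 0 and B(x) ≠ 0. Then the function A(x)/x transforms under the involution ρ(x) = −A(x)/B(x) into −μx/A(x); that is, A(ρ(x))/ρ(x) = −μ·x/A(x). -/
section

variable {F : Type*} [Field F] {a : F}

theorem Af_eq_add (ha : a ≠ 0) (x : F) : Af a x = x + (a⁻¹ - 1) := by
  unfold Af
  field_simp
  ring

theorem muf_eq_mul_sub_one (ha : a ≠ 0) (b : F) : muf a b = (a⁻¹ - 1) * (b - 1) - 1 := by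
  unfold muf
  field_simp
  ring

-- `A` is translation by `c = a⁻¹ - 1`, so `A(ρ(x)) = (c * B(x) - A(x)) / B(x)`,
-- and the constant term of the numerator cancels because `B(0) = 1`.
theorem Af_rhof (ha : a ≠ 0) {b x : F} (hBx : Bf b x ≠ 0) :
    Af a (rhof a b x) = muf a b * x / Bf b x := by
  have numerator_eq : -Af a x + (a⁻¹ - 1) * Bf b x = muf a b * x := by
    rw [Af_eq_add ha, muf_eq_mul_sub_one ha, Bf]
    ring
  calc
    Af a (rhof a b x) = -Af a x / Bf b x + (a⁻¹ - 1) := Af_eq_add ha _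
    _ = (-Af a x + (a⁻¹ - 1) * Bf b x) / Bf b x := div_add' _ _ _ hBx
    _ = muf a b * x / Bf b x := by rw [numerator_eq]

end

/-- A(ρ(x))/ρ(x) = −μ·x/A(x). -/
theorem stmt_5 {F : Type*} [Field F] (a b : F) (ha : a ≠ 0) (x : F)
    (hAx : Af a x ≠ 0) (hBx : Bf b x ≠ 0) :
    Af a (rhof a b x) / rhof a b x = -(muf a b) * x / Af a x := by
  calc
    Af a (rhof a b x) / rhof a b x
        = muf a b * x / Bf b x / (-Af a x / Bf b x) := by rw [Af_rhof ha hBx, rhof]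
    _ = muf a b * x / -Af a x := div_div_div_cancel_right₀ hBx _ _
    _ = -(muf a b) * x / Af a x := by rw [div_neg, neg_mul, neg_div]
end

section
/- Let F be a field, a, b ∈ F with a ≠ 0, and let x, y ∈ F with B(x) ≠ 0, B(y) ≠ 0 and A(y) ≠ 0. Then the function 1 − x/y transforms under the simultaneous involution ρ in both variables into μ(x−y)/(A(y)B(x)); that is, 1 − ρ(x)/ρ(y) = μ·(x − y)/(A(y)·B(x)), where ρ(x) = −A(x)/B(x). In particular A(y)·B(x) − A(x)·B(y) = μ·(x − y). -/
/-!
The maps `A` and `B` are affine, so `A(y) B(x) - A(x) B(y)` is an alternating form in the vectors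
`(x, 1)` and `(y, 1)`: it is `y - x` times the determinant of the coefficients of `A` and `B`, and
this determinant is `-μ`. Putting `1 - ρ(x)/ρ(y)` over the common denominator `A(y) B(x)` makes
exactly this expression its numerator.
-/

theorem affine_mul_affine_sub_swap {R : Type*} [CommRing R] (p q r s x y : R) :
    (p * y + q) * (r * x + s) - (p * x + q) * (r * y + s) = (p * s - q * r) * (y - x) := by
  ring

section LinearFractional

variable {F : Type*} [Field F]

theorem Af_eq_affine_div (a x : F) : Af a x = (a * x + (1 - a)) / a := by
  rw [Af, sub_add_eq_add_sub, add_sub_assoc]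

theorem Bf_eq_affine (b x : F) : Bf b x = (b - 1) * x + 1 := by
  rw [Bf, sub_one_mul]

theorem muf_eq_neg_det_div (a b : F) : muf a b = -((a * 1 - (1 - a) * (b - 1)) / a) := by
  rw [muf]
  ring

theorem Af_mul_Bf_sub_swap (a b x y : F) :
    Af a y * Bf b x - Af a x * Bf b y = muf a b * (x - y) :=
  calc
    _ = ((a * y + (1 - a)) * ((b - 1) * x + 1) - (a * x + (1 - a)) * ((b - 1) * y + 1)) / a := by
      rw [Af_eq_affine_div, Af_eq_affine_div, Bf_eq_affine, Bf_eq_affine, sub_div,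
        div_mul_eq_mul_div, div_mul_eq_mul_div]
    _ = (a * 1 - (1 - a) * (b - 1)) * (y - x) / a := by
      rw [affine_mul_affine_sub_swap]
    _ = muf a b * (x - y) := by
      rw [muf_eq_neg_det_div, neg_mul_comm, neg_sub, div_mul_eq_mul_div]

theorem rhof_div_rhof (a b x y : F) :
    rhof a b x / rhof a b y = Af a x * Bf b y / (Af a y * Bf b x) := by
  rw [rhof, rhof, div_div_div_eq, neg_mul, mul_neg, neg_div_neg_eq, mul_comm (Bf b x)]

theorem one_sub_rhof_div_rhof {a b x y : F} (hBx : Bf b x ≠ 0) (hAy : Af a y ≠ 0) :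
    1 - rhof a b x / rhof a b y = muf a b * (x - y) / (Af a y * Bf b x) := by
  rw [rhof_div_rhof, one_sub_div (mul_ne_zero hAy hBx), Af_mul_Bf_sub_swap]

end LinearFractional

/-- 1 − ρ(x)/ρ(y) = μ·(x − y)/(A(y)·B(x)); in particular
    A(y)·B(x) − A(x)·B(y) = μ·(x − y). -/
theorem stmt_7 {F : Type*} [Field F] (a b : F) (ha : a ≠ 0) (x y : F)
    (hBx : Bf b x ≠ 0) (hBy : Bf b y ≠ 0) (hAy : Af a y ≠ 0) :
    1 - rhof a b x / rhof a b y = muf a b * (x - y) / (Af a y * Bf b x) ∧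
    Af a y * Bf b x - Af a x * Bf b y = muf a b * (x - y) :=
  ⟨one_sub_rhof_div_rhof hBx hAy, Af_mul_Bf_sub_swap a b x y⟩
end

section
/- Let F be a field, a, b, c ∈ F with a ≠ 0, b ≠ 0, c ≠ 0, A(c) ≠ 0, B(c) ≠ 0, and let y ∈ F with y ≠ 0, A(y) ≠ 0 and B(y) ≠ 0. Set y₂ = −A(c)/B(c), l₁(y) = 1 − y/c and l₂(y) = (y₂ − y)/(y₂·B(y)). Then the function l(y) = 1 − k(c)/k(y) factors as l(y) = l₁(y)·l₂(y), where k(x) = B(x)/(a·b·x·A(x)). Moreover l₁(0) = l₂(0) = 1. -/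
/-!
As a function of `y`, the numerator `c A(c) B(y) - y A(y) B(c)` of `1 - k(c)/k(y)` is a quadratic
polynomial with roots `c` and `ρ(c) = -A(c)/B(c)`. Each root contributes one of the two factors.
-/

section

variable {F : Type*} [Field F] {a b c : F}

theorem Bf_zero (b : F) : Bf b 0 = 1 := by
  simp [Bf]

theorem rhof_ne_zero (hAc : Af a c ≠ 0) (hBc : Bf b c ≠ 0) : rhof a b c ≠ 0 :=
  div_ne_zero (neg_ne_zero.mpr hAc) hBc

theorem rhof_mul_Bf (hBc : Bf b c ≠ 0) : rhof a b c * Bf b c = -Af a c :=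
  div_mul_cancel₀ _ hBc

-- At a zero or pole of `k` both sides agree: division by zero then makes each of them `0`.
theorem kf_div_kf (ha : a ≠ 0) (hb : b ≠ 0) (x y : F) :
    kf a b x / kf a b y = y * Af a y * Bf b x / (x * Af a x * Bf b y) := by
  calc kf a b x / kf a b y
      = a * b * (y * Af a y * Bf b x) / (a * b * (x * Af a x * Bf b y)) := by
        rw [kf, kf, div_div_div_eq]
        ring_nf
    _ = y * Af a y * Bf b x / (x * Af a x * Bf b y) :=
        mul_div_mul_left _ _ (mul_ne_zero ha hb)

theorem mul_Af_mul_Bf_sub (ha : a ≠ 0) (b x y : F) :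
    x * Af a x * Bf b y - y * Af a y * Bf b x = (x - y) * (Af a x + y * Bf b x) := by
  unfold Af Bf
  field_simp
  ring

theorem one_sub_kf_div_kf (ha : a ≠ 0) (hb : b ≠ 0) (hc : c ≠ 0) (hAc : Af a c ≠ 0)
    (hBc : Bf b c ≠ 0) {y : F} (hBy : Bf b y ≠ 0) :
    1 - kf a b c / kf a b y =
      (1 - y / c) * ((rhof a b c - y) / (rhof a b c * Bf b y)) := by
  have second_factor :
      (rhof a b c - y) / (rhof a b c * Bf b y) = (Af a c + y * Bf b c) / (Af a c * Bf b y) := by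
    rw [div_eq_div_iff (mul_ne_zero (rhof_ne_zero hAc hBc) hBy) (mul_ne_zero hAc hBy)]
    linear_combination (-y * Bf b y) * rhof_mul_Bf (a := a) hBc
  calc 1 - kf a b c / kf a b y
      = (c * Af a c * Bf b y - y * Af a y * Bf b c) / (c * Af a c * Bf b y) := by
        rw [kf_div_kf ha hb, one_sub_div (mul_ne_zero (mul_ne_zero hc hAc) hBy)]
    _ = (c - y) / c * ((Af a c + y * Bf b c) / (Af a c * Bf b y)) := by
        rw [mul_Af_mul_Bf_sub ha, mul_assoc c, mul_div_mul_comm]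
    _ = (1 - y / c) * ((rhof a b c - y) / (rhof a b c * Bf b y)) := by
        rw [second_factor, one_sub_div hc]

end

/-- with y₂ = −A(c)/B(c), l₁(y) = 1 − y/c, l₂(y) = (y₂ − y)/(y₂·B(y)),
    the function l(y) = 1 − k(c)/k(y) factors as l(y) = l₁(y)·l₂(y);
    moreover l₁(0) = l₂(0) = 1. -/
theorem stmt_13 {F : Type*} [Field F] (a b c : F) (ha : a ≠ 0) (hb : b ≠ 0)
    (hc : c ≠ 0) (hAc : Af a c ≠ 0) (hBc : Bf b c ≠ 0) (y : F)
    (hy : y ≠ 0) (hAy : Af a y ≠ 0) (hBy : Bf b y ≠ 0) :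
    1 - kf a b c / kf a b y =
      (1 - y / c) * ((-(Af a c) / Bf b c - y) / (-(Af a c) / Bf b c * Bf b y)) ∧
    1 - (0 : F) / c = 1 ∧
    (-(Af a c) / Bf b c - 0) / (-(Af a c) / Bf b c * Bf b 0) = 1 := by
  refine ⟨one_sub_kf_div_kf ha hb hc hAc hBc hBy, by rw [zero_div, sub_zero], ?_⟩
  rw [Bf_zero, sub_zero, mul_one]
  exact div_self (rhof_ne_zero hAc hBc)
end

section
/- Let F be a field and a, b ∈ F with a ≠ 0, b ≠ 0, a ≠ 1 and ab − b + 1 ≠ 0, and set a′ = (ab − b + 1)/(b(a − 1)), A′(t) = (a′·t − a′ + 1)/a′, σ(x) = −x/B(x). Then for all x ∈ F with B(x) ≠ 0 and abx + 1 ≠ 0, one has (a′·b·σ(x) + 1)/(a′·A′(σ(x))) = a·b·A(x)/(a·b·x + 1); that is, under the substitutions τ: a ↦ a′ and σ, the function (abx+1)/(aA(x)) becomes its reciprocal scaled by b, namely abA(x)/(abx+1). -/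
/-!
Over the common denominator `B(x)`, both `a′·b·σ(x) + 1` and `a′·A′(σ(x))` have numerators that are
affine in `1 - a′`. Since `1 - a′ = -1 / (b(a - 1))`, the first becomes `-a·A(x) / ((a - 1)·B(x))`
and the second `-(abx + 1) / (b(a - 1)·B(x))`; the factor `(a - 1)·B(x)` cancels in the quotient.
-/

/-- The parameter `a′ = (ab − b + 1)/(b(a − 1))` which the substitution `τ` puts in place of `a`.
It takes the junk value `0` when `b = 0` or `a = 1`. -/
def tauf {F : Type*} [Field F] (a b : F) : F := (a * b - b + 1) / (b * (a - 1))

section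

variable {F : Type*} [Field F] {a b p x : F}

theorem mul_Af (ha : a ≠ 0) : a * Af a x = a * x - a + 1 :=
  mul_div_cancel₀ _ ha

theorem mul_sigf_add_one (hB : Bf b x ≠ 0) :
    p * b * sigf b x + 1 = (1 - x + (1 - p) * b * x) / Bf b x := by
  rw [sigf, eq_div_iff hB, add_mul, mul_assoc, div_mul_cancel₀ _ hB, Bf]
  ring

theorem mul_Af_sigf (hp : p ≠ 0) (hB : Bf b x ≠ 0) :
    p * Af p (sigf b x) = ((1 - p) * (b * x + 1) - x) / Bf b x := by
  rw [mul_Af hp, sigf, eq_div_iff hB, add_mul, sub_mul, mul_assoc, div_mul_cancel₀ _ hB, Bf]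
  ring

theorem tauf_ne_zero (hb : b ≠ 0) (ha1 : a ≠ 1) (hab : a * b - b + 1 ≠ 0) : tauf a b ≠ 0 :=
  div_ne_zero hab (mul_ne_zero hb (sub_ne_zero.mpr ha1))

theorem one_sub_tauf (hb : b ≠ 0) (ha1 : a ≠ 1) : 1 - tauf a b = -1 / (b * (a - 1)) := by
  have hden : b * (a - 1) ≠ 0 := mul_ne_zero hb (sub_ne_zero.mpr ha1)
  rw [tauf, one_sub_div hden]
  ring

theorem tauf_mul_sigf_add_one (ha : a ≠ 0) (hb : b ≠ 0) (ha1 : a ≠ 1) (hB : Bf b x ≠ 0) :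
    tauf a b * b * sigf b x + 1 = -(a * Af a x) / ((a - 1) * Bf b x) := by
  have ha1' : a - 1 ≠ 0 := sub_ne_zero.mpr ha1
  rw [mul_sigf_add_one hB, one_sub_tauf hb ha1, mul_Af ha]
  field_simp
  ring

theorem tauf_mul_Af_sigf (hb : b ≠ 0) (ha1 : a ≠ 1) (hab : a * b - b + 1 ≠ 0)
    (hB : Bf b x ≠ 0) :
    tauf a b * Af (tauf a b) (sigf b x) = -(a * b * x + 1) / (b * (a - 1) * Bf b x) := by
  have ha1' : a - 1 ≠ 0 := sub_ne_zero.mpr ha1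
  rw [mul_Af_sigf (tauf_ne_zero hb ha1 hab) hB, one_sub_tauf hb ha1]
  field_simp
  ring

end

/-- with a′ = (ab − b + 1)/(b(a − 1)), A′(t) = (a′·t − a′ + 1)/a′ and
    σ(x) = −x/B(x): for all x with B(x) ≠ 0 and abx + 1 ≠ 0,
    (a′·b·σ(x) + 1)/(a′·A′(σ(x))) = a·b·A(x)/(a·b·x + 1). -/
theorem stmt_17 {F : Type*} [Field F] (a b : F) (ha : a ≠ 0) (hb : b ≠ 0)
    (ha1 : a ≠ 1) (hab : a * b - b + 1 ≠ 0) :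
    ∀ x : F, Bf b x ≠ 0 → a * b * x + 1 ≠ 0 →
    ((a * b - b + 1) / (b * (a - 1)) * b * sigf b x + 1) /
        ((a * b - b + 1) / (b * (a - 1)) * Af ((a * b - b + 1) / (b * (a - 1))) (sigf b x)) =
      a * b * Af a x / (a * b * x + 1) := by
  intro x hB hx
  have ha1' : a - 1 ≠ 0 := sub_ne_zero.mpr ha1
  change (tauf a b * b * sigf b x + 1) / (tauf a b * Af (tauf a b) (sigf b x)) = _
  rw [tauf_mul_sigf_add_one ha hb ha1 hB, tauf_mul_Af_sigf hb ha1 hab hB]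
  field_simp
end
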